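/- Let D be a dense subset of Ω and let (φ_l, φ_u) be a pair of real functions on D, locally bounded relative to Ω, which is H-continuous as a pair on D (with D as the underlying domain). Then there exists a unique H-continuous pair (u, v) on Ω such that u(x) = φ_l(x) and v(x) = φ_u(x) for all x ∈ D; namely, u = I(D,Ω,φ_l) and v = S(D,Ω,φ_u). -/

import Mathlib

open Set

/-- Points of `ℝⁿ`. -/
abbrev Pt (n : ℕ) := EuclideanSpace ℝ (Fin n)

/-- Lower Baire operator `I(D,Ω,f)(x) = sup_{δ>0} inf { f y : y ∈ B_δ(x) ∩ D }`,
where `B_δ(x) = { y ∈ Ω : ‖y - x‖ < δ }`. -/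
noncomputable def Ilow {n : ℕ} (D Om : Set (Pt n)) (f : Pt n → ℝ) (x : Pt n) : ℝ :=
  sSup {a : ℝ | ∃ δ : ℝ, 0 < δ ∧
    a = sInf (f '' {y | y ∈ Om ∧ ‖y - x‖ < δ ∧ y ∈ D})}

/-- Upper Baire operator `S(D,Ω,f)(x) = inf_{δ>0} sup { f y : y ∈ B_δ(x) ∩ D }`. -/
noncomputable def Shigh {n : ℕ} (D Om : Set (Pt n)) (f : Pt n → ℝ) (x : Pt n) : ℝ :=
  sInf {a : ℝ | ∃ δ : ℝ, 0 < δ ∧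
    a = sSup (f '' {y | y ∈ Om ∧ ‖y - x‖ < δ ∧ y ∈ D})}

/-- `f`, defined on `D ⊆ Ω`, is locally bounded relative to `Ω`. -/
def LocBddOn {n : ℕ} (Om D : Set (Pt n)) (f : Pt n → ℝ) : Prop :=
  ∀ x ∈ Om, ∃ δ : ℝ, 0 < δ ∧ ∃ M : ℝ,
    ∀ y, y ∈ Om → ‖y - x‖ < δ → y ∈ D → |f y| < M

/-- `(u, v)` encodes an interval-valued function `x ↦ [u x, v x]` on `Om`. -/
def IntervalPair {n : ℕ} (Om : Set (Pt n)) (u v : Pt n → ℝ) : Prop :=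
  LocBddOn Om Om u ∧ LocBddOn Om Om v ∧ ∀ x ∈ Om, u x ≤ v x

/-- The pair `(u, v)` is S-continuous on `Om`: `I(u) = u` and `S(v) = v`. -/
def SCont {n : ℕ} (Om : Set (Pt n)) (u v : Pt n → ℝ) : Prop :=
  ∀ x ∈ Om, Ilow Om Om u x = u x ∧ Shigh Om Om v x = v x

/-- The pair `(u, v)` is Hausdorff continuous on `Om`. -/
def HCont {n : ℕ} (Om : Set (Pt n)) (u v : Pt n → ℝ) : Prop :=
  ∀ p q : Pt n → ℝ, LocBddOn Om Om p → LocBddOn Om Om q →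
    (∀ x ∈ Om, u x ≤ p x ∧ p x ≤ q x ∧ q x ≤ v x) →
    ∀ x ∈ Om, Ilow Om Om p x = u x ∧ Shigh Om Om q x = v x

/-- `(u, v)` is an H-continuous interval pair on `Om`. -/
def HContPair {n : ℕ} (Om : Set (Pt n)) (u v : Pt n → ℝ) : Prop :=
  IntervalPair Om u v ∧ HCont Om u v

/-- Lower endpoint of the pointwise interval product. -/
noncomputable def imin {n : ℕ} (u₁ v₁ u₂ v₂ : Pt n → ℝ) (x : Pt n) : ℝ :=
  min (min (u₁ x * u₂ x) (u₁ x * v₂ x)) (min (v₁ x * u₂ x) (v₁ x * v₂ x))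

/-- Upper endpoint of the pointwise interval product. -/
noncomputable def imax {n : ℕ} (u₁ v₁ u₂ v₂ : Pt n → ℝ) (x : Pt n) : ℝ :=
  max (max (u₁ x * u₂ x) (u₁ x * v₂ x)) (max (v₁ x * u₂ x) (v₁ x * v₂ x))

/-- `(pl, pu)` is the H-continuous pair contained pointwise in the interval sum of
`(u₁, v₁)` and `(u₂, v₂)`, i.e. `(pl, pu) = (u₁,v₁) ⊕ (u₂,v₂)`. -/
def IsOplus {n : ℕ} (Om : Set (Pt n)) (u₁ v₁ u₂ v₂ pl pu : Pt n → ℝ) : Prop :=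
  HContPair Om pl pu ∧
    ∀ x ∈ Om, u₁ x + u₂ x ≤ pl x ∧ pl x ≤ pu x ∧ pu x ≤ v₁ x + v₂ x

/-- `(ql, qu)` is the H-continuous pair contained pointwise in the interval product of
`(u₁, v₁)` and `(u₂, v₂)`, i.e. `(ql, qu) = (u₁,v₁) ⊗ (u₂,v₂)`. -/
def IsOtimes {n : ℕ} (Om : Set (Pt n)) (u₁ v₁ u₂ v₂ ql qu : Pt n → ℝ) : Prop :=
  HContPair Om ql qu ∧
    ∀ x ∈ Om, imin u₁ v₁ u₂ v₂ x ≤ ql x ∧ ql x ≤ qu x ∧ qu x ≤ imax u₁ v₁ u₂ v₂ x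

/-!
At a point of the closure of `D` the lower Baire operator is the lower limit along `𝓝[D] x`, and
lower limits are lower semicontinuous:
`liminf f (𝓝[D] x) ≤ liminf (fun y => liminf f (𝓝[D] y)) (𝓝[Ω] x)`.
Suppose `p ≥ I(φ_l)` on `Ω` and `p ≤ φ_u` on `D`. Semicontinuity gives `I(φ_l) ≤ I(p)`. Conversely,
H-continuity on `D`, applied to `(p, φ_u)`, identifies the lower limit of `p` along `D` with `φ_l`
at the points of `D`; semicontinuity along `D` then gives
`I(p)(x) ≤ liminf p (𝓝[D] x) ≤ liminf φ_l (𝓝[D] x) = I(φ_l)(x)`. Hence `I(p) = I(φ_l)`, and the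
upper half follows by passing from `(u, v)` to `(-v, -u)`.

For uniqueness, restricting a lower limit to `D` can only increase it, so any H-continuous extension
`(u, v)` satisfies `u ≤ I(φ_l) ≤ S(φ_u) ≤ v`, and H-continuity of `(u, v)` forces equality.
-/

open Filter Topology Bornology Metric

section LiminfNhdsWithin

variable {X α : Type*} [TopologicalSpace X] [ConditionallyCompleteLattice α]
  {s t : Set X} {f g : X → α} {x : X}

theorem eventually_liminf_nhdsWithin_mem_Icc {a b : α} (hts : t ⊆ closure s)
    (hf : ∀ᶠ y in 𝓝[s] x, f y ∈ Icc a b) :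
    ∀ᶠ y in 𝓝[t] x, liminf f (𝓝[s] y) ∈ Icc a b := by
  filter_upwards [nhdsWithin_le_nhds (eventually_nhds_nhdsWithin.2 hf), self_mem_nhdsWithin]
    with y hy hyt
  have := mem_closure_iff_nhdsWithin_neBot.1 (hts hyt)
  have hge : ∀ᶠ z in 𝓝[s] y, a ≤ f z := hy.mono fun _ hz => hz.1
  have hle : ∀ᶠ z in 𝓝[s] y, f z ≤ b := hy.mono fun _ hz => hz.2
  exact ⟨le_liminf_of_le (isBoundedUnder_of_eventually_le hle).isCoboundedUnder_ge hge,
    liminf_le_of_frequently_le hle.frequently (isBoundedUnder_of_eventually_ge hge)⟩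

theorem liminf_le_liminf_liminf_nhdsWithin (hts : t ⊆ closure s) (hx : x ∈ closure t)
    (hle : (𝓝[s] x).IsBoundedUnder (· ≤ ·) f) (hge : (𝓝[s] x).IsBoundedUnder (· ≥ ·) f) :
    liminf f (𝓝[s] x) ≤ liminf (fun y => liminf f (𝓝[s] y)) (𝓝[t] x) := by
  have := mem_closure_iff_nhdsWithin_neBot.1 hx
  obtain ⟨b, hb⟩ := hle.eventually_le
  have hIcc {a : α} (ha : ∀ᶠ y in 𝓝[s] x, a ≤ f y) :=
    eventually_liminf_nhdsWithin_mem_Icc hts (ha.and hb)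
  obtain ⟨a, ha⟩ := hge.eventually_ge
  have hcobdd : (𝓝[t] x).IsCoboundedUnder (· ≥ ·) fun y => liminf f (𝓝[s] y) :=
    (isBoundedUnder_of_eventually_le ((hIcc ha).mono fun _ hy => hy.2)).isCoboundedUnder_ge
  exact liminf_le_of_le hge fun c hc =>
    le_liminf_of_le hcobdd ((hIcc hc).mono fun _ hy => hy.1)

theorem liminf_nhdsWithin_eq_of_subset_closure (hst : s ⊆ t) (hts : t ⊆ closure s) (hx : x ∈ t)
    (hfle : (𝓝[s] x).IsBoundedUnder (· ≤ ·) f) (hfge : (𝓝[s] x).IsBoundedUnder (· ≥ ·) f)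
    (hgle : (𝓝[t] x).IsBoundedUnder (· ≤ ·) g) (hgge : (𝓝[t] x).IsBoundedUnder (· ≥ ·) g)
    (hfg : ∀ y ∈ t, liminf f (𝓝[s] y) ≤ g y) (hgf : ∀ y ∈ s, liminf g (𝓝[s] y) = f y) :
    liminf g (𝓝[t] x) = liminf f (𝓝[s] x) := by
  have := mem_closure_iff_nhdsWithin_neBot.1 (hts hx)
  have := mem_closure_iff_nhdsWithin_neBot.1 (subset_closure hx)
  have hmono : 𝓝[s] x ≤ 𝓝[t] x := nhdsWithin_mono x hst
  apply le_antisymm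
  · calc liminf g (𝓝[t] x)
        ≤ liminf g (𝓝[s] x) :=
          liminf_le_liminf_of_le hmono hgge (hgle.mono hmono).isCoboundedUnder_ge
      _ ≤ liminf (fun y => liminf g (𝓝[s] y)) (𝓝[s] x) :=
          liminf_le_liminf_liminf_nhdsWithin subset_closure (hts hx) (hgle.mono hmono)
            (hgge.mono hmono)
      _ = liminf f (𝓝[s] x) := liminf_congr (eventually_mem_nhdsWithin.mono hgf)
  · obtain ⟨a, ha⟩ := hfge.eventually_ge
    obtain ⟨b, hb⟩ := hfle.eventually_le
    have hbdd : (𝓝[t] x).IsBoundedUnder (· ≥ ·) fun y => liminf f (𝓝[s] y) :=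
      isBoundedUnder_of_eventually_ge
        ((eventually_liminf_nhdsWithin_mem_Icc hts (ha.and hb)).mono fun _ hy => hy.1)
    calc liminf f (𝓝[s] x)
        ≤ liminf (fun y => liminf f (𝓝[s] y)) (𝓝[t] x) :=
          liminf_le_liminf_liminf_nhdsWithin hts (subset_closure hx) hfle hfge
      _ ≤ liminf g (𝓝[t] x) :=
          liminf_le_liminf (eventually_mem_nhdsWithin.mono hfg) hbdd hgle.isCoboundedUnder_ge

end LiminfNhdsWithin

/-- `f` is bounded below on every bounded subset of `s`. For such `f` every infimum occurring in
`Ilow` is a genuine one; otherwise the convention `sInf A = 0` for `A` unbounded below lets balls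
of large radius contribute the value `0` to the supremum. -/
def BddBelowOnBounded {X α : Type*} [Bornology X] [Preorder α] (s : Set X) (f : X → α) : Prop :=
  ∀ t ⊆ s, IsBounded t → BddBelow (f '' t)

namespace BddBelowOnBounded

theorem mono_set {X α : Type*} [Bornology X] [Preorder α] {s t : Set X} {f : X → α}
    (hf : BddBelowOnBounded t f) (hst : s ⊆ t) : BddBelowOnBounded s f :=
  fun r hr => hf r (hr.trans hst)

theorem mono {X α : Type*} [Bornology X] [Preorder α] {s : Set X} {f g : X → α}
    (hf : BddBelowOnBounded s f) (hfg : ∀ x ∈ s, f x ≤ g x) : BddBelowOnBounded s g := by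
  intro t hts ht
  obtain ⟨a, ha⟩ := hf t hts ht
  exact ⟨a, forall_mem_image.2 fun x hx => (ha (mem_image_of_mem f hx)).trans (hfg x (hts hx))⟩

theorem liminf_nhdsWithin {X α : Type*} [PseudoMetricSpace X] [ConditionallyCompleteLattice α]
    {s t : Set X} {f : X → α} (hf : BddBelowOnBounded s f) (hts : t ⊆ closure s)
    (hle : ∀ x ∈ t, (𝓝[s] x).IsBoundedUnder (· ≤ ·) f) :
    BddBelowOnBounded t fun x => liminf f (𝓝[s] x) := by
  intro r hrt hr
  obtain ⟨a, ha⟩ := hf (thickening 1 r ∩ s) inter_subset_right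
    (hr.thickening.subset inter_subset_left)
  refine ⟨a, forall_mem_image.2 fun x hx => ?_⟩
  have := mem_closure_iff_nhdsWithin_neBot.1 (hts (hrt hx))
  have hnear : thickening 1 r ∈ 𝓝 x :=
    isOpen_thickening.mem_nhds (self_subset_thickening one_pos r hx)
  refine le_liminf_of_le (hle x (hrt hx)).isCoboundedUnder_ge ?_
  filter_upwards [inter_mem (mem_nhdsWithin_of_mem_nhds hnear) self_mem_nhdsWithin] with y hy
  exact ha (mem_image_of_mem f hy)

end BddBelowOnBounded

section BaireOperators

variable {n : ℕ} {Om D : Set (Pt n)} {f g : Pt n → ℝ} {x : Pt n}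

theorem setOf_norm_sub_lt_eq_ball_inter (hD : D ⊆ Om) (x : Pt n) (δ : ℝ) :
    {y | y ∈ Om ∧ ‖y - x‖ < δ ∧ y ∈ D} = ball x δ ∩ D := by
  ext y
  simp only [mem_ofPred_eq, mem_inter_iff, mem_ball_iff_norm]
  exact ⟨And.right, fun h => ⟨hD h.2, h⟩⟩

theorem locBddOn_iff_isBoundedUnder (hD : D ⊆ Om) :
    LocBddOn Om D f ↔ ∀ x ∈ Om, (𝓝[D] x).IsBoundedUnder (· ≤ ·) fun y => |f y| := by
  refine forall₂_congr fun x _ => ⟨?_, ?_⟩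
  · rintro ⟨δ, hδ, M, hM⟩
    refine isBoundedUnder_of_eventually_le (a := M) ?_
    filter_upwards [nhdsWithin_basis_ball.mem_of_mem hδ] with y hy
    exact (hM y (hD hy.2) (mem_ball_iff_norm.1 hy.1) hy.2).le
  · intro h
    obtain ⟨M, hM⟩ := h.eventually_le
    obtain ⟨δ, hδ, hball⟩ := nhdsWithin_basis_ball.mem_iff.1 hM
    exact ⟨δ, hδ, M + 1, fun y _ hyx hy =>
      (hball ⟨mem_ball_iff_norm.2 hyx, hy⟩ : |f y| ≤ M).trans_lt (lt_add_one M)⟩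

theorem LocBddOn.isBoundedUnder_le (hf : LocBddOn Om D f) (hD : D ⊆ Om) (hx : x ∈ Om) :
    (𝓝[D] x).IsBoundedUnder (· ≤ ·) f :=
  (isBoundedUnder_le_abs.1 ((locBddOn_iff_isBoundedUnder hD).1 hf x hx)).1

theorem LocBddOn.isBoundedUnder_ge (hf : LocBddOn Om D f) (hD : D ⊆ Om) (hx : x ∈ Om) :
    (𝓝[D] x).IsBoundedUnder (· ≥ ·) f :=
  (isBoundedUnder_le_abs.1 ((locBddOn_iff_isBoundedUnder hD).1 hf x hx)).2

theorem LocBddOn.restrict (hf : LocBddOn Om Om f) (hD : D ⊆ Om) : LocBddOn D D f :=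
  (locBddOn_iff_isBoundedUnder subset_rfl).2 fun x hx =>
    ((locBddOn_iff_isBoundedUnder subset_rfl).1 hf x (hD hx)).mono (nhdsWithin_mono x hD)

theorem LocBddOn.neg (hf : LocBddOn Om D f) : LocBddOn Om D (-f) := by
  simpa only [LocBddOn, Pi.neg_apply, abs_neg] using hf

theorem Ilow_congr (h : EqOn f g D) : Ilow D Om f = Ilow D Om g := by
  funext x
  have himage (δ : ℝ) : f '' {y | y ∈ Om ∧ ‖y - x‖ < δ ∧ y ∈ D} =
      g '' {y | y ∈ Om ∧ ‖y - x‖ < δ ∧ y ∈ D} :=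
    image_congr fun y hy => h hy.2.2
  simp only [Ilow, himage]

open scoped Pointwise in
theorem Ilow_neg (D Om : Set (Pt n)) (f : Pt n → ℝ) : Ilow D Om (-f) = -Shigh D Om f := by
  funext x
  have himage (s : Set (Pt n)) : sInf ((-f) '' s) = -sSup (f '' s) := by
    rw [← Real.sInf_neg, ← image_neg_eq_neg, image_image]
    rfl
  rw [Pi.neg_apply, Ilow, Shigh, ← Real.sSup_neg]
  congr 1
  ext a
  simp only [himage, mem_ofPred_eq, Set.mem_neg, neg_eq_iff_eq_neg]

theorem Shigh_neg (D Om : Set (Pt n)) (f : Pt n → ℝ) : Shigh D Om (-f) = -Ilow D Om f := by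
  rw [← neg_neg (Shigh D Om (-f)), ← Ilow_neg, neg_neg]

theorem Shigh_congr (h : EqOn f g D) : Shigh D Om f = Shigh D Om g := by
  have hneg : EqOn (-f) (-g) D := fun x hx => congrArg Neg.neg (h hx)
  simpa only [Ilow_neg, neg_inj] using Ilow_congr (Om := Om) hneg

theorem Ilow_eq_liminf (hD : D ⊆ Om) (hf : BddBelowOnBounded D f) (hx : x ∈ closure D) :
    Ilow D Om f x = liminf f (𝓝[D] x) := by
  simp only [Ilow, setOf_norm_sub_lt_eq_ball_inter hD, liminf_eq]
  apply csSup_eq_csSup_of_forall_exists_le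
  · rintro _ ⟨δ, hδ, rfl⟩
    refine ⟨_, ?_, le_rfl⟩
    filter_upwards [nhdsWithin_basis_ball.mem_of_mem hδ] with y hy
    exact csInf_le (hf _ inter_subset_right (isBounded_ball.subset inter_subset_left))
      (mem_image_of_mem f hy)
  · intro a ha
    obtain ⟨δ, hδ, hball⟩ := nhdsWithin_basis_ball.mem_iff.1 ha
    have hne : (ball x δ ∩ D).Nonempty := mem_closure_iff_nhds.1 hx _ (ball_mem_nhds x hδ)
    exact ⟨_, ⟨δ, hδ, rfl⟩, le_csInf (hne.image f) (forall_mem_image.2 hball)⟩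

theorem Shigh_eq_limsup (hD : D ⊆ Om) (hf : BddBelowOnBounded D (-f)) (hloc : LocBddOn Om D f)
    (hx : x ∈ Om) (hxD : x ∈ closure D) : Shigh D Om f x = limsup f (𝓝[D] x) := by
  have := mem_closure_iff_nhdsWithin_neBot.1 hxD
  have hle := hloc.isBoundedUnder_le hD hx
  have hge := hloc.isBoundedUnder_ge hD hx
  have hneg : -limsup f (𝓝[D] x) = liminf (-f) (𝓝[D] x) :=
    Antitone.map_limsup_of_continuousAt (f := Neg.neg) (fun _ _ => neg_le_neg) f
      continuous_neg.continuousAt hle hge.isCoboundedUnder_le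
  rw [← neg_inj, hneg, ← Ilow_eq_liminf hD hf hxD, Ilow_neg, Pi.neg_apply]

theorem bddBelowOnBounded_Ilow (hD : D ⊆ Om) (hdense : Om ⊆ closure D)
    (hloc : LocBddOn Om D f) (hf : BddBelowOnBounded D f) :
    BddBelowOnBounded Om (Ilow D Om f) :=
  (hf.liminf_nhdsWithin hdense fun _ hx => hloc.isBoundedUnder_le hD hx).mono
    fun _ hx => (Ilow_eq_liminf hD hf (hdense hx)).ge

theorem locBddOn_Ilow (hD : D ⊆ Om) (hdense : Om ⊆ closure D)
    (hloc : LocBddOn Om D f) (hf : BddBelowOnBounded D f) :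
    LocBddOn Om Om (Ilow D Om f) := by
  refine (locBddOn_iff_isBoundedUnder subset_rfl).2 fun x hx => ?_
  obtain ⟨M, hM⟩ := ((locBddOn_iff_isBoundedUnder hD).1 hloc x hx).eventually_le
  refine isBoundedUnder_of_eventually_le (a := M) ?_
  filter_upwards [self_mem_nhdsWithin,
    eventually_liminf_nhdsWithin_mem_Icc hdense (hM.mono fun _ => abs_le.1)] with y hy hIcc
  rw [Ilow_eq_liminf hD hf (hdense hy)]
  exact abs_le.2 hIcc

-- The convention `sInf A = 0` for `A` unbounded below makes every large ball contribute `0`.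
theorem Ilow_nonneg_of_not_bddBelow {t : Set (Pt n)} (hD : D ⊆ Om) (htD : t ⊆ D)
    (ht : IsBounded t) (hf : ¬BddBelow (f '' t)) (x : Pt n) : 0 ≤ Ilow D Om f x := by
  obtain ⟨δ, hδ, htball⟩ := ht.subset_ball_lt 0 x
  have hball : ¬BddBelow (f '' (ball x δ ∩ D)) :=
    fun h => hf (h.mono (image_mono (subset_inter htball htD)))
  refine Real.sSup_nonneg' ⟨_, ⟨δ, hδ, rfl⟩, ?_⟩
  rw [setOf_norm_sub_lt_eq_ball_inter hD, Real.sInf_of_not_bddBelow hball]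

end BaireOperators

namespace HContPair

variable {n : ℕ} {Om D : Set (Pt n)} {u v u' v' p : Pt n → ℝ} {x : Pt n}

theorem sCont (h : HContPair Om u v) : SCont Om u v :=
  h.2 u v h.1.1 h.1.2.1 fun x hx => ⟨le_rfl, h.1.2.2 x hx, le_rfl⟩

theorem neg (h : HContPair Om u v) : HContPair Om (-v) (-u) := by
  obtain ⟨⟨hu, hv, huv⟩, hH⟩ := h
  refine ⟨⟨hv.neg, hu.neg, fun x hx => neg_le_neg (huv x hx)⟩, fun p q hp hq hpq x hx => ?_⟩
  have hbetween : ∀ y ∈ Om, u y ≤ (-q) y ∧ (-q) y ≤ (-p) y ∧ (-p) y ≤ v y := fun y hy =>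
    have ⟨hvp, hpq, hqu⟩ := hpq y hy
    ⟨le_neg_of_le_neg hqu, neg_le_neg hpq, neg_le_of_neg_le hvp⟩
  have ⟨hIlow, hShigh⟩ := hH (-q) (-p) hq.neg hp.neg hbetween x hx
  rw [Ilow_neg] at hIlow
  rw [Shigh_neg] at hShigh
  exact ⟨neg_eq_iff_eq_neg.1 hShigh, neg_eq_iff_eq_neg.1 hIlow⟩

theorem bddBelowOnBounded (h : HContPair Om u v) : BddBelowOnBounded Om u := by
  intro t htOm ht
  by_contra hunbdd
  have hnonneg : ∀ x ∈ t, 0 ≤ u x := fun x hx =>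
    (Ilow_nonneg_of_not_bddBelow subset_rfl htOm ht hunbdd x).trans_eq (h.sCont x (htOm hx)).1
  exact hunbdd ⟨0, forall_mem_image.2 hnonneg⟩

theorem Ilow_eq (h : HContPair D u v) (hD : D ⊆ Om) (hx : x ∈ D) : Ilow D Om u x = u x := by
  rw [Ilow_eq_liminf hD h.bddBelowOnBounded (subset_closure hx),
    ← Ilow_eq_liminf subset_rfl h.bddBelowOnBounded (subset_closure hx), (h.sCont x hx).1]

theorem Shigh_eq (h : HContPair D u v) (hD : D ⊆ Om) (hx : x ∈ D) : Shigh D Om v x = v x := by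
  simpa only [Ilow_neg, Pi.neg_apply, neg_inj] using h.neg.Ilow_eq hD hx

theorem Ilow_le_Shigh (h : HContPair D u v) (hD : D ⊆ Om) (hdense : Om ⊆ closure D)
    (hu : LocBddOn Om D u) (hv : LocBddOn Om D v) (hx : x ∈ Om) :
    Ilow D Om u x ≤ Shigh D Om v x := by
  have := mem_closure_iff_nhdsWithin_neBot.1 (hdense hx)
  rw [Ilow_eq_liminf hD h.bddBelowOnBounded (hdense hx),
    Shigh_eq_limsup hD h.neg.bddBelowOnBounded hv hx (hdense hx)]
  exact liminf_le_limsup_of_frequently_le (eventually_mem_nhdsWithin.mono h.1.2.2).frequently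
    (hu.isBoundedUnder_ge hD hx) (hv.isBoundedUnder_le hD hx)

theorem Ilow_eq_Ilow_of_le (h : HContPair D u v) (hD : D ⊆ Om) (hdense : Om ⊆ closure D)
    (hu : LocBddOn Om D u) (hp : LocBddOn Om Om p) (hup : ∀ x ∈ Om, Ilow D Om u x ≤ p x)
    (hpv : ∀ x ∈ D, p x ≤ v x) (hx : x ∈ Om) : Ilow Om Om p x = Ilow D Om u x := by
  have hupD : ∀ y ∈ D, u y ≤ p y := fun y hy => (h.Ilow_eq hD hy).symm.trans_le (hup y (hD hy))
  have hpOm : BddBelowOnBounded Om p :=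
    (bddBelowOnBounded_Ilow hD hdense hu h.bddBelowOnBounded).mono hup
  have hpD : ∀ y ∈ D, liminf p (𝓝[D] y) = u y := fun y hy => by
    rw [← Ilow_eq_liminf subset_rfl (hpOm.mono_set hD) (subset_closure hy)]
    exact (h.2 p v (hp.restrict hD) h.1.2.1
      (fun z hz => ⟨hupD z hz, hpv z hz, le_rfl⟩) y hy).1
  have hup' : ∀ y ∈ Om, liminf u (𝓝[D] y) ≤ p y := fun y hy =>
    (Ilow_eq_liminf hD h.bddBelowOnBounded (hdense hy)).symm.trans_le (hup y hy)
  rw [Ilow_eq_liminf subset_rfl hpOm (subset_closure hx),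
    Ilow_eq_liminf hD h.bddBelowOnBounded (hdense hx)]
  exact liminf_nhdsWithin_eq_of_subset_closure hD hdense hx
    (hu.isBoundedUnder_le hD hx) (hu.isBoundedUnder_ge hD hx)
    (hp.isBoundedUnder_le subset_rfl hx) (hp.isBoundedUnder_ge subset_rfl hx) hup' hpD

theorem Shigh_eq_Shigh_of_le (h : HContPair D u v) (hD : D ⊆ Om) (hdense : Om ⊆ closure D)
    (hv : LocBddOn Om D v) (hp : LocBddOn Om Om p) (hpv : ∀ x ∈ Om, p x ≤ Shigh D Om v x)
    (hup : ∀ x ∈ D, u x ≤ p x) (hx : x ∈ Om) : Shigh Om Om p x = Shigh D Om v x := by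
  have hpv' : ∀ x ∈ Om, Ilow D Om (-v) x ≤ (-p) x := fun x hx => by
    simpa only [Ilow_neg, Pi.neg_apply] using neg_le_neg (hpv x hx)
  simpa only [Ilow_neg, Pi.neg_apply, neg_inj] using
    h.neg.Ilow_eq_Ilow_of_le hD hdense hv.neg hp.neg hpv' (fun x hx => neg_le_neg (hup x hx)) hx

theorem extend (h : HContPair D u v) (hD : D ⊆ Om) (hdense : Om ⊆ closure D)
    (hu : LocBddOn Om D u) (hv : LocBddOn Om D v) :
    HContPair Om (Ilow D Om u) (Shigh D Om v) := by
  have hShigh : LocBddOn Om Om (Shigh D Om v) := by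
    simpa only [Ilow_neg, neg_neg] using
      (locBddOn_Ilow hD hdense hv.neg h.neg.bddBelowOnBounded).neg
  refine ⟨⟨locBddOn_Ilow hD hdense hu h.bddBelowOnBounded, hShigh,
    fun x hx => h.Ilow_le_Shigh hD hdense hu hv hx⟩, fun p q hp hq hpq x hx => ⟨?_, ?_⟩⟩
  · refine h.Ilow_eq_Ilow_of_le hD hdense hu hp (fun y hy => (hpq y hy).1) (fun y hy => ?_) hx
    have ⟨_, hpq, hqv⟩ := hpq y (hD hy)
    exact (hpq.trans hqv).trans_eq (h.Shigh_eq hD hy)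
  · refine h.Shigh_eq_Shigh_of_le hD hdense hv hq (fun y hy => (hpq y hy).2.2) (fun y hy => ?_) hx
    have ⟨hup, hpq, _⟩ := hpq y (hD hy)
    exact (h.Ilow_eq hD hy).symm.trans_le (hup.trans hpq)

theorem le_Ilow (h : HContPair Om u v) (hD : D ⊆ Om) (hdense : Om ⊆ closure D) (hx : x ∈ Om) :
    u x ≤ Ilow D Om u x := by
  have := mem_closure_iff_nhdsWithin_neBot.1 (hdense hx)
  have hmono : 𝓝[D] x ≤ 𝓝[Om] x := nhdsWithin_mono x hD
  have hle := (h.1.1.isBoundedUnder_le subset_rfl hx).mono hmono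
  calc u x = Ilow Om Om u x := (h.sCont x hx).1.symm
    _ = liminf u (𝓝[Om] x) := Ilow_eq_liminf subset_rfl h.bddBelowOnBounded (subset_closure hx)
    _ ≤ liminf u (𝓝[D] x) := liminf_le_liminf_of_le hmono
        (h.1.1.isBoundedUnder_ge subset_rfl hx) hle.isCoboundedUnder_ge
    _ = Ilow D Om u x := (Ilow_eq_liminf hD (h.bddBelowOnBounded.mono_set hD) (hdense hx)).symm

theorem Shigh_le (h : HContPair Om u v) (hD : D ⊆ Om) (hdense : Om ⊆ closure D) (hx : x ∈ Om) :
    Shigh D Om v x ≤ v x := by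
  simpa only [Ilow_neg, Pi.neg_apply, neg_le_neg_iff] using h.neg.le_Ilow hD hdense hx

theorem eq_of_le (h : HContPair Om u v) (h' : HContPair Om u' v')
    (hu : ∀ x ∈ Om, u x ≤ u' x) (hv : ∀ x ∈ Om, v' x ≤ v x) (hx : x ∈ Om) :
    u x = u' x ∧ v x = v' x :=
  have ⟨hIlow, hShigh⟩ := h.2 u' v' h'.1.1 h'.1.2.1
    (fun y hy => ⟨hu y hy, h'.1.2.2 y hy, hv y hy⟩) x hx
  ⟨hIlow.symm.trans (h'.sCont x hx).1, hShigh.symm.trans (h'.sCont x hx).2⟩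

end HContPair

theorem stmt15 {n : ℕ} (Om D : Set (Pt n)) (hD : D ⊆ Om) (hdense : Om ⊆ closure D)
    (phl phu : Pt n → ℝ)
    (hbl : LocBddOn Om D phl) (hbu : LocBddOn Om D phu)
    (hle : ∀ x ∈ D, phl x ≤ phu x)
    (hH : HContPair D phl phu) :
    (HContPair Om (Ilow D Om phl) (Shigh D Om phu) ∧
      ∀ x ∈ D, Ilow D Om phl x = phl x ∧ Shigh D Om phu x = phu x) ∧
    ∀ u v : Pt n → ℝ, HContPair Om u v →
      (∀ x ∈ D, u x = phl x ∧ v x = phu x) →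
      ∀ x ∈ Om, u x = Ilow D Om phl x ∧ v x = Shigh D Om phu x := by
  have hext := hH.extend hD hdense hbl hbu
  refine ⟨⟨hext, fun x hx => ⟨hH.Ilow_eq hD hx, hH.Shigh_eq hD hx⟩⟩, fun u v huv hres x hx => ?_⟩
  have hIlow : Ilow D Om u = Ilow D Om phl := Ilow_congr fun y hy => (hres y hy).1
  have hShigh : Shigh D Om v = Shigh D Om phu := Shigh_congr fun y hy => (hres y hy).2
  exact huv.eq_of_le hext (fun y hy => hIlow ▸ huv.le_Ilow hD hdense hy)
    (fun y hy => hShigh ▸ huv.Shigh_le hD hdense hy) hx
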